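/- arXiv:quant-ph/0502138 — 4 statements merged into one kernel-verified Lean document; each statement's English description precedes it below -/
import Mathlib

section
/- For any two functions f, g : {0,1,…,n} → {1,…,n}, the inner product of the associated vectors satisfies ⟨ψ_f, ψ_g⟩ = (|Δ_{f,g}| − 1)/n, where Δ_{f,g} = {x : f(x) = g(x)} is the collision set of f and g. -/
open scoped ComplexInnerProductSpace ComplexConjugate BigOperators

/-- The tensor product `x ⊗ conj x'` of a vector with the componentwise conjugate of
another vector, viewed as a vector of `ℂ^n ⊗ ℂ^n ≅ ℂ^{n²}`. -/
noncomputable def tensConj {n : ℕ} (x x' : EuclideanSpace ℂ (Fin n)) :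
    EuclideanSpace ℂ (Fin n × Fin n) :=
  WithLp.toLp 2 fun p => x p.1 * conj (x' p.2)
/-- The state `φ = (1/√n) Σ_b v_b ⊗ conj v_b` built from a basis `v`. -/
noncomputable def meState {n : ℕ} (v : Fin n → EuclideanSpace ℂ (Fin n)) :
    EuclideanSpace ℂ (Fin n × Fin n) :=
  ((Real.sqrt n : ℂ))⁻¹ • ∑ b : Fin n, tensConj (v b) (v b)

/-- The state `ψ_f = -φ + γ_f` where `φ = (1/√n) Σ_b v_{0,b} ⊗ conj v_{0,b}` and
`γ_f = (1/√n) Σ_a v_{a,f(a)} ⊗ conj v_{a,f(a)}`. -/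
noncomputable def psiState {n : ℕ} (v : Fin (n + 1) → Fin n → EuclideanSpace ℂ (Fin n))
    (f : Fin (n + 1) → Fin n) : EuclideanSpace ℂ (Fin n × Fin n) :=
  -meState (v 0) +
    ((Real.sqrt n : ℂ))⁻¹ • ∑ a : Fin (n + 1), tensConj (v a (f a)) (v a (f a))

/-! Up to normalization, both `φ` and `γ_f` are sums of vectors `x ⊗ conj x`, and
`⟨x ⊗ conj x, y ⊗ conj y⟩ = |⟨x, y⟩|²`, so every inner product below is a double sum of squared
overlaps. When one of the two families is an orthonormal basis, Parseval's identity evaluates that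
sum, giving `⟨φ, φ⟩ = 1` and `⟨φ, γ_g⟩ = ⟨γ_f, φ⟩ = (n + 1) / n`. For `⟨γ_f, γ_g⟩` the diagonal
terms count collisions, and the `(n + 1) n` off-diagonal terms all equal `1 / n`. -/

section Overlaps

variable {𝕜 E ι κ : Type*} [RCLike 𝕜] [NormedAddCommGroup E] [InnerProductSpace 𝕜 E] [Fintype ι]

theorem sum_norm_inner_sq_of_orthonormal_of_card_eq_finrank [FiniteDimensional 𝕜 E] {v : ι → E}
    (hv : Orthonormal 𝕜 v) (hcard : Fintype.card ι = Module.finrank 𝕜 E) (x : E) :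
    ∑ i, ‖inner 𝕜 (v i) x‖ ^ 2 = ‖x‖ ^ 2 := by
  have hspan := hv.linearIndependent.span_eq_top_of_card_eq_finrank' hcard
  simpa only [OrthonormalBasis.coe_mk] using
    (OrthonormalBasis.mk hv hspan.ge).sum_sq_norm_inner_right x

theorem sum_sum_norm_inner_sq_of_mutually_unbiased [DecidableEq κ] {v : ι → κ → E} {c : ℝ}
    (horth : ∀ a, Orthonormal 𝕜 (v a))
    (hunbiased : ∀ a a', a ≠ a' → ∀ b b', ‖inner 𝕜 (v a b) (v a' b')‖ ^ 2 = c) (f g : ι → κ) :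
    ∑ a, ∑ a', ‖inner 𝕜 (v a (f a)) (v a' (g a'))‖ ^ 2 =
      (Finset.univ.filter fun a => f a = g a).card +
        Fintype.card ι * ((Fintype.card ι : ℝ) - 1) * c := by
  classical
  have hdiag (a : ι) : ‖inner 𝕜 (v a (f a)) (v a (g a))‖ ^ 2 = if f a = g a then 1 else 0 := by
    rw [orthonormal_iff_ite.mp (horth a)]
    split_ifs <;> simp
  have hterm (a a' : ι) : ‖inner 𝕜 (v a (f a)) (v a' (g a'))‖ ^ 2 =
      c + if a = a' then (if f a = g a then 1 else 0) - c else 0 := by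
    rcases eq_or_ne a a' with rfl | hne
    · simp [hdiag]
    · simp [hunbiased a a' hne, hne]
  simp only [hterm, Finset.sum_add_distrib, Finset.sum_ite_eq, Finset.mem_univ, if_true,
    Finset.sum_sub_distrib, Finset.sum_boole, Finset.sum_const, Finset.card_univ, nsmul_eq_mul]
  ring

end Overlaps

theorem inner_tensConj {n : ℕ} (x x' y y' : EuclideanSpace ℂ (Fin n)) :
    ⟪tensConj x x', tensConj y y'⟫ = ⟪x, y⟫ * ⟪y', x'⟫ := by
  simp only [tensConj, PiLp.inner_apply, RCLike.inner_apply, map_mul, Complex.conj_conj,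
    Finset.sum_mul_sum, Fintype.sum_prod_type]
  exact Finset.sum_congr rfl fun i _ => Finset.sum_congr rfl fun j _ => by ring

theorem inner_tensConj_self {n : ℕ} (x y : EuclideanSpace ℂ (Fin n)) :
    ⟪tensConj x x, tensConj y y⟫ = ((‖⟪x, y⟫‖ ^ 2 : ℝ) : ℂ) := by
  rw [inner_tensConj, ← inner_conj_symm y x, Complex.mul_conj, Complex.normSq_eq_norm_sq]

/-- The vector `(1/√n) Σ_i u_i ⊗ conj u_i` of a finite family `u` in `ℂ^n`: it is `φ` when `u` is
an orthonormal basis, and `γ_f` when `u a = v_{a,f(a)}`. -/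
noncomputable def familyState {n : ℕ} {ι : Type*} [Fintype ι] (u : ι → EuclideanSpace ℂ (Fin n)) :
    EuclideanSpace ℂ (Fin n × Fin n) :=
  ((Real.sqrt n : ℂ))⁻¹ • ∑ i, tensConj (u i) (u i)

theorem psiState_eq_familyState_sub {n : ℕ} (v : Fin (n + 1) → Fin n → EuclideanSpace ℂ (Fin n))
    (f : Fin (n + 1) → Fin n) :
    psiState v f = familyState (fun a => v a (f a)) - familyState (v 0) :=
  neg_add_eq_sub _ _

section FamilyState

variable {n : ℕ} {ι κ : Type*} [Fintype ι] [Fintype κ]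

theorem inner_familyState (u : ι → EuclideanSpace ℂ (Fin n)) (w : κ → EuclideanSpace ℂ (Fin n)) :
    ⟪familyState u, familyState w⟫ = ((∑ i, ∑ j, ‖⟪u i, w j⟫‖ ^ 2 : ℝ) : ℂ) / n := by
  have hscale : conj ((Real.sqrt n : ℂ))⁻¹ * ((Real.sqrt n : ℂ))⁻¹ = (n : ℂ)⁻¹ := by
    rw [map_inv₀, Complex.conj_ofReal, ← mul_inv, ← Complex.ofReal_mul,
      Real.mul_self_sqrt n.cast_nonneg, Complex.ofReal_natCast]
  rw [familyState, familyState, inner_smul_left, inner_smul_right, ← mul_assoc, hscale,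
    div_eq_inv_mul, sum_inner]
  simp only [inner_sum, inner_tensConj_self, Complex.ofReal_sum]

theorem inner_familyState_of_orthonormal_left {v : Fin n → EuclideanSpace ℂ (Fin n)}
    (hv : Orthonormal ℂ v) (u : ι → EuclideanSpace ℂ (Fin n)) :
    ⟪familyState v, familyState u⟫ = ((∑ i, ‖u i‖ ^ 2 : ℝ) : ℂ) / n := by
  rw [inner_familyState, Finset.sum_comm]
  simp only [sum_norm_inner_sq_of_orthonormal_of_card_eq_finrank hv finrank_euclideanSpace.symm]

theorem inner_familyState_of_orthonormal_right {v : Fin n → EuclideanSpace ℂ (Fin n)}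
    (hv : Orthonormal ℂ v) (u : ι → EuclideanSpace ℂ (Fin n)) :
    ⟪familyState u, familyState v⟫ = ((∑ i, ‖u i‖ ^ 2 : ℝ) : ℂ) / n := by
  rw [← inner_conj_symm, inner_familyState_of_orthonormal_left hv, map_div₀, Complex.conj_ofReal,
    Complex.conj_natCast]

end FamilyState

/-- for any two functions `f g : {0,…,n} → {1,…,n}`, the inner product of the
associated vectors is `⟨ψ_f, ψ_g⟩ = (|Δ_{f,g}| − 1)/n`, where `Δ_{f,g} = {x : f x = g x}`. -/
theorem inner_psiState_eq_collisions
    (n : ℕ) (hn : 1 ≤ n)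
    (v : Fin (n + 1) → Fin n → EuclideanSpace ℂ (Fin n))
    (horth : ∀ a, Orthonormal ℂ (v a))
    (hmub : ∀ a a', a ≠ a' → ∀ b b', ‖⟪v a b, v a' b'⟫‖ ^ 2 = 1 / n)
    (f g : Fin (n + 1) → Fin n) :
    ⟪psiState v f, psiState v g⟫ =
      (((Finset.univ.filter fun x => f x = g x).card : ℂ) - 1) / n := by
  have hn0 : (n : ℂ) ≠ 0 := by exact_mod_cast Nat.one_le_iff_ne_zero.mp hn
  have hnorm (a : Fin (n + 1)) (b : Fin n) : ‖v a b‖ = 1 := (horth a).norm_eq_one b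
  have hφφ : ⟪familyState (v 0), familyState (v 0)⟫ = 1 := by
    rw [inner_familyState_of_orthonormal_left (horth 0)]
    simp [hnorm, hn0]
  have hφγ : ⟪familyState (v 0), familyState fun a => v a (g a)⟫ = (n + 1) / n := by
    rw [inner_familyState_of_orthonormal_left (horth 0)]
    simp [hnorm]
  have hγφ : ⟪familyState fun a => v a (f a), familyState (v 0)⟫ = (n + 1) / n := by
    rw [inner_familyState_of_orthonormal_right (horth 0)]
    simp [hnorm]
  have hγγ : ⟪familyState fun a => v a (f a), familyState fun a => v a (g a)⟫ =
      ((Finset.univ.filter fun x => f x = g x).card + (n + 1)) / n := by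
    rw [inner_familyState, sum_sum_norm_inner_sq_of_mutually_unbiased horth hmub, Fintype.card_fin]
    push_cast
    field_simp
    ring
  rw [psiState_eq_familyState_sub, psiState_eq_familyState_sub, inner_sub_left, inner_sub_right,
    inner_sub_right, hφφ, hφγ, hγφ, hγγ]
  field_simp
  ring
end

section
/- For any two functions f, g : {0,1,…,n} → {1,…,n}, one has ⟨ψ_f, ψ_g⟩ = 0 if and only if |Δ_{f,g}| = 1, where Δ_{f,g} = {x : f(x) = g(x)}; moreover ⟨ψ_f, ψ_f⟩ = 1, i.e. each ψ_f is a unit vector. -/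
open scoped ComplexInnerProductSpace ComplexConjugate BigOperators

/-!
Since `⟨x ⊗ conj x, y ⊗ conj y⟩ = |⟨x, y⟩|²`, inner products between `φ` and the `γ_f` are sums of
squared overlaps. Parseval's identity gives `⟨φ, φ⟩ = 1` and `⟨φ, γ_f⟩ = (n + 1) / n`; in
`n ⟨γ_f, γ_g⟩` the diagonal terms count `Δ_{f,g}` and the `(n + 1) n` off-diagonal ones contribute
`1 / n` each. Hence `n ⟨ψ_f, ψ_g⟩ = n - 2 (n + 1) + |Δ_{f,g}| + (n + 1) = |Δ_{f,g}| - 1`.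
-/

section InnerProductSpace

variable {𝕜 E ι κ : Type*} [RCLike 𝕜] [NormedAddCommGroup E] [InnerProductSpace 𝕜 E]
  [Fintype ι]

theorem sum_sq_norm_inner_of_card_eq_finrank [FiniteDimensional 𝕜 E] {w : ι → E}
    (hw : Orthonormal 𝕜 w) (hcard : Fintype.card ι = Module.finrank 𝕜 E) (x : E) :
    ∑ i, ‖inner 𝕜 (w i) x‖ ^ 2 = ‖x‖ ^ 2 := by
  have hspan : ⊤ ≤ Submodule.span 𝕜 (Set.range w) :=
    (hw.linearIndependent.span_eq_top_of_card_eq_finrank' hcard).ge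
  simpa only [OrthonormalBasis.coe_mk] using
    (OrthonormalBasis.mk hw hspan).sum_sq_norm_inner_right x

theorem sum_sum_sq_norm_inner_of_unbiased {v : ι → κ → E} {c : ℝ}
    [DecidableEq κ] (horth : ∀ a, Orthonormal 𝕜 (v a))
    (hunbiased : ∀ a a', a ≠ a' → ∀ b b', ‖inner 𝕜 (v a b) (v a' b')‖ ^ 2 = c) (f g : ι → κ) :
    ∑ a, ∑ a', ‖inner 𝕜 (v a (f a)) (v a' (g a'))‖ ^ 2 =
      (Finset.univ.filter fun a => f a = g a).card +
        Fintype.card ι * (Fintype.card ι - 1) * c := by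
  classical
  have hdiag (a : ι) :
      ‖inner 𝕜 (v a (f a)) (v a (g a))‖ ^ 2 = if f a = g a then (1 : ℝ) else 0 := by
    rw [orthonormal_iff_ite.mp (horth a)]
    split_ifs <;> simp
  have hrow (a : ι) : ∑ a', ‖inner 𝕜 (v a (f a)) (v a' (g a'))‖ ^ 2 =
      (if f a = g a then 1 else 0) + (Fintype.card ι - 1) * c := by
    have hoff : ∀ a' ∈ Finset.univ.erase a, ‖inner 𝕜 (v a (f a)) (v a' (g a'))‖ ^ 2 = c :=
      fun a' ha' => hunbiased a a' (Finset.ne_of_mem_erase ha').symm _ _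
    rw [← Finset.add_sum_erase _ _ (Finset.mem_univ a), hdiag, Finset.sum_congr rfl hoff,
      Finset.sum_const, nsmul_eq_mul, Finset.cast_card_erase_of_mem (Finset.mem_univ a),
      Finset.card_univ]
  simp only [hrow, Finset.sum_add_distrib, Finset.sum_boole, Finset.sum_const, Finset.card_univ,
    nsmul_eq_mul, mul_assoc]

end InnerProductSpace

section TensorSquare

variable {n : ℕ} {ι κ : Type*} [Fintype ι] [Fintype κ]

theorem inner_tensConj_tensConj (x x' y y' : EuclideanSpace ℂ (Fin n)) :
    ⟪tensConj x x', tensConj y y'⟫ = ⟪x, y⟫ * conj ⟪x', y'⟫ := by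
  simp only [PiLp.inner_apply, tensConj, map_sum, Finset.sum_mul_sum, Fintype.sum_prod_type]
  refine Finset.sum_congr rfl fun i _ => Finset.sum_congr rfl fun j _ => ?_
  simp only [RCLike.inner_apply, map_mul, RCLike.conj_conj]
  ring

theorem inner_tensConj_self_self (x y : EuclideanSpace ℂ (Fin n)) :
    ⟪tensConj x x, tensConj y y⟫ = ((‖⟪x, y⟫‖ ^ 2 : ℝ) : ℂ) := by
  rw [inner_tensConj_tensConj, Complex.mul_conj']
  norm_cast

/-- The vector `(1/√n) Σ_i x_i ⊗ conj x_i` attached to a finite family `x`. Taking for `x` an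
orthonormal basis gives `φ`, and taking `x_a = v_{a,f(a)}` gives `γ_f`. -/
noncomputable def diagState (x : ι → EuclideanSpace ℂ (Fin n)) :
    EuclideanSpace ℂ (Fin n × Fin n) :=
  ((Real.sqrt n : ℂ))⁻¹ • ∑ i, tensConj (x i) (x i)

theorem inner_diagState_diagState (x : ι → EuclideanSpace ℂ (Fin n))
    (y : κ → EuclideanSpace ℂ (Fin n)) :
    ⟪diagState x, diagState y⟫ = (((∑ i, ∑ j, ‖⟪x i, y j⟫‖ ^ 2) / n : ℝ) : ℂ) := by
  have hscalar : ((Real.sqrt n : ℂ))⁻¹ * ((Real.sqrt n : ℂ))⁻¹ = (n : ℂ)⁻¹ := by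
    rw [← mul_inv, ← Complex.ofReal_mul, Real.mul_self_sqrt n.cast_nonneg, Complex.ofReal_natCast]
  have hsum : ⟪∑ i, tensConj (x i) (x i), ∑ j, tensConj (y j) (y j)⟫ =
      ((∑ i, ∑ j, ‖⟪x i, y j⟫‖ ^ 2 : ℝ) : ℂ) := by
    simp only [sum_inner, inner_sum, inner_tensConj_self_self, Complex.ofReal_sum]
    exact Finset.sum_comm
  rw [diagState, diagState, inner_smul_left, inner_smul_right, hsum, map_inv₀,
    Complex.conj_ofReal, ← mul_assoc, hscalar, Complex.ofReal_div, Complex.ofReal_natCast,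
    div_eq_inv_mul]

theorem inner_diagState_of_orthonormal {w : Fin n → EuclideanSpace ℂ (Fin n)}
    (hw : Orthonormal ℂ w) {y : ι → EuclideanSpace ℂ (Fin n)} (hy : ∀ i, ‖y i‖ = 1) :
    ⟪diagState w, diagState y⟫ = (Fintype.card ι : ℂ) / n := by
  have hparseval (i : ι) : ∑ b, ‖⟪w b, y i⟫‖ ^ 2 = 1 := by
    rw [sum_sq_norm_inner_of_card_eq_finrank hw finrank_euclideanSpace.symm, hy, one_pow]
  rw [inner_diagState_diagState, Finset.sum_comm]
  simp [hparseval]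

theorem psiState_eq_diagState_sub_diagState
    (v : Fin (n + 1) → Fin n → EuclideanSpace ℂ (Fin n)) (f : Fin (n + 1) → Fin n) :
    psiState v f = diagState (fun a => v a (f a)) - diagState (v 0) :=
  neg_add_eq_sub _ _

theorem inner_psiState_psiState {v : Fin (n + 1) → Fin n → EuclideanSpace ℂ (Fin n)}
    (horth : ∀ a, Orthonormal ℂ (v a))
    (hmub : ∀ a a', a ≠ a' → ∀ b b', ‖⟪v a b, v a' b'⟫‖ ^ 2 = 1 / n)
    (f g : Fin (n + 1) → Fin n) :
    ⟪psiState v f, psiState v g⟫ =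
      (((Finset.univ.filter fun x => f x = g x).card : ℂ) - 1) / n := by
  have hn : (n : ℂ) ≠ 0 := Nat.cast_ne_zero.mpr (f 0).pos.ne'
  let φ := diagState (v 0)
  let γ (h : Fin (n + 1) → Fin n) := diagState fun a => v a (h a)
  have hφφ : ⟪φ, φ⟫ = (1 : ℂ) := by
    rw [inner_diagState_of_orthonormal (horth 0) (horth 0).norm_eq_one, Fintype.card_fin,
      div_self hn]
  have hφγ (h : Fin (n + 1) → Fin n) : ⟪φ, γ h⟫ = ((n : ℂ) + 1) / n := by
    rw [inner_diagState_of_orthonormal (horth 0) fun a => (horth a).norm_eq_one _,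
      Fintype.card_fin, Nat.cast_succ]
  have hγφ : ⟪γ f, φ⟫ = ((n : ℂ) + 1) / n := by
    rw [← inner_conj_symm, hφγ]
    simp
  have hγγ : ⟪γ f, γ g⟫ =
      (((Finset.univ.filter fun x => f x = g x).card : ℂ) + (n + 1)) / n := by
    rw [inner_diagState_diagState, sum_sum_sq_norm_inner_of_unbiased horth hmub,
      Fintype.card_fin]
    push_cast
    field_simp
    ring
  calc
    ⟪psiState v f, psiState v g⟫ = ⟪γ f - φ, γ g - φ⟫ := by
      rw [psiState_eq_diagState_sub_diagState, psiState_eq_diagState_sub_diagState]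
    _ = ⟪γ f, γ g⟫ - ⟪γ f, φ⟫ - (⟪φ, γ g⟫ - ⟪φ, φ⟫) := by
      rw [inner_sub_left, inner_sub_right, inner_sub_right]
    _ = (((Finset.univ.filter fun x => f x = g x).card : ℂ) - 1) / n := by
      rw [hγγ, hγφ, hφγ, hφφ]
      field_simp
      ring

end TensorSquare

/-- `⟨ψ_f, ψ_g⟩ = 0` if and only if the collision set `Δ_{f,g} = {x : f x = g x}`
has exactly one element; moreover `⟨ψ_f, ψ_f⟩ = 1`, i.e. each `ψ_f` is a unit vector. -/
theorem inner_psiState_eq_zero_iff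
    (n : ℕ) (hn : 1 ≤ n)
    (v : Fin (n + 1) → Fin n → EuclideanSpace ℂ (Fin n))
    (horth : ∀ a, Orthonormal ℂ (v a))
    (hmub : ∀ a a', a ≠ a' → ∀ b b', ‖⟪v a b, v a' b'⟫‖ ^ 2 = 1 / n)
    (f g : Fin (n + 1) → Fin n) :
    (⟪psiState v f, psiState v g⟫ = 0 ↔
      (Finset.univ.filter fun x => f x = g x).card = 1) ∧
    ⟪psiState v f, psiState v f⟫ = 1 := by
  have hn0 : (n : ℂ) ≠ 0 := Nat.cast_ne_zero.mpr (by omega)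
  constructor
  · rw [inner_psiState_psiState horth hmub, div_eq_zero_iff, or_iff_left hn0, sub_eq_zero,
      Nat.cast_eq_one]
  · rw [inner_psiState_psiState horth hmub]
    simp [hn0]
end

section
/- If f = f_{i,ℓ} and g = f_{i*,ℓ*} are two distinct functions in the family {f_{i,ℓ} : 1 ≤ i ≤ n, ℓ ∈ L_i}, then f and g have exactly one collision: |{a ∈ {0,1,…,n} : f(a) = g(a)}| = 1. -/
open scoped BigOperators

/-- An affine plane of order `n`, presented through its `n+1` parallel classes
`L 0, …, L n` of lines on the point set `Fin n × Fin n` (an `(n², n²+n, n+1, n, 1)` design):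
each class consists of `n` pairwise disjoint `n`-element lines covering all `n²` points,
distinct classes share no line, and every pair of distinct points lies on exactly one line
of the family. -/
structure IsAffinePlane (n : ℕ) (L : Fin (n + 1) → Finset (Finset (Fin n × Fin n))) :
    Prop where
  card_class : ∀ i, (L i).card = n
  card_line : ∀ i, ∀ ℓ ∈ L i, ℓ.card = n
  parallel_disjoint : ∀ i, ∀ ℓ ∈ L i, ∀ ℓ' ∈ L i, ℓ ≠ ℓ' → ℓ ∩ ℓ' = ∅
  class_cover : ∀ i, ∀ p : Fin n × Fin n, ∃ ℓ ∈ L i, p ∈ ℓ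
  classes_disjoint : ∀ i j, i ≠ j → ∀ ℓ ∈ L i, ℓ ∉ L j
  unique_line : ∀ p q : Fin n × Fin n, p ≠ q →
    ∃! ℓ : Finset (Fin n × Fin n), (∃ i, ℓ ∈ L i) ∧ p ∈ ℓ ∧ q ∈ ℓ

/-!
A line has `n` points, so if it contains `(a, f a)` for each of the `n` values of `a` it is the
graph of `f`; collisions at positive arguments then correspond to common points of the two lines.
Lines from different classes meet in exactly one point while the functions differ at `0`; distinct
lines from the same class are disjoint while the functions agree at `0`.
-/

/-- The graph of a function on a finite type, as a `Finset`. It identifies the line `ℓ` with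
the values of `f_{i,ℓ}` at the positive arguments. -/
def functionGraph {α β : Type*} [Fintype α] (f : α → β) : Finset (α × β) :=
  Finset.univ.map ⟨fun a => (a, f a), fun _ _ h => congrArg Prod.fst h⟩

section functionGraph

variable {α β : Type*} [Fintype α] {f : α → β}

theorem mem_functionGraph {p : α × β} : p ∈ functionGraph f ↔ f p.1 = p.2 := by
  constructor
  · intro hp
    obtain ⟨a, -, rfl⟩ := Finset.mem_map.1 hp
    rfl
  · intro hp
    exact Finset.mem_map.2 ⟨p.1, Finset.mem_univ _, Prod.ext rfl hp⟩

theorem card_functionGraph (f : α → β) : (functionGraph f).card = Fintype.card α :=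
  Finset.card_map _

theorem functionGraph_injective :
    Function.Injective (functionGraph : (α → β) → Finset (α × β)) := by
  intro f g hfg
  funext a
  have mem_graph_g : (a, f a) ∈ functionGraph g := hfg ▸ mem_functionGraph.2 rfl
  exact (mem_functionGraph.1 mem_graph_g).symm

theorem eq_functionGraph_of_card_le {s : Finset (α × β)} (hs : s.card ≤ Fintype.card α)
    (hf : ∀ a, (a, f a) ∈ s) : s = functionGraph f := by
  have graph_subset : functionGraph f ⊆ s := by
    rintro ⟨a, b⟩ hp
    obtain rfl : f a = b := mem_functionGraph.1 hp
    exact hf a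
  exact (Finset.eq_of_subset_of_card_le graph_subset (hs.trans_eq (card_functionGraph f).symm)).symm

theorem card_functionGraph_inter [DecidableEq α] [DecidableEq β] (f g : α → β) :
    (functionGraph f ∩ functionGraph g).card = (Finset.univ.filter fun a => f a = g a).card := by
  refine (Finset.card_nbij' (fun a => (a, f a)) Prod.fst ?_ ?_ ?_ ?_).symm <;>
    simp +contextual [Set.MapsTo, Set.LeftInvOn, mem_functionGraph, eq_comm]

end functionGraph

namespace IsAffinePlane

variable {n : ℕ} {L : Fin (n + 1) → Finset (Finset (Fin n × Fin n))} {i j : Fin (n + 1)}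
  {ℓ ℓ' : Finset (Fin n × Fin n)}

theorem eq_of_mem_of_mem (hL : IsAffinePlane n L) (hℓ : ℓ ∈ L i) (hℓ' : ℓ' ∈ L j)
    {p q : Fin n × Fin n} (hpq : p ≠ q) (hp : p ∈ ℓ) (hq : q ∈ ℓ) (hp' : p ∈ ℓ') (hq' : q ∈ ℓ') :
    ℓ = ℓ' :=
  (hL.unique_line p q hpq).unique ⟨⟨i, hℓ⟩, hp, hq⟩ ⟨⟨j, hℓ'⟩, hp', hq'⟩

theorem ne_of_class_ne (hL : IsAffinePlane n L) (hij : i ≠ j) (hℓ : ℓ ∈ L i) (hℓ' : ℓ' ∈ L j) :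
    ℓ ≠ ℓ' :=
  fun h => hL.classes_disjoint i j hij ℓ hℓ (h ▸ hℓ')

theorem card_inter_le_one (hL : IsAffinePlane n L) (hℓ : ℓ ∈ L i) (hℓ' : ℓ' ∈ L j)
    (hne : ℓ ≠ ℓ') : (ℓ ∩ ℓ').card ≤ 1 := by
  refine Finset.card_le_one.2 fun p hp q hq => ?_
  rw [Finset.mem_inter] at hp hq
  by_contra hpq
  exact hne (hL.eq_of_mem_of_mem hℓ hℓ' hpq hp.1 hq.1 hp.2 hq.2)

-- Sending `p ∈ ℓ` to the line of `L j` through `p` is injective, hence onto `L j` by counting.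
theorem inter_nonempty_of_class_ne (hL : IsAffinePlane n L) (hij : i ≠ j) (hℓ : ℓ ∈ L i)
    (hℓ' : ℓ' ∈ L j) : (ℓ ∩ ℓ').Nonempty := by
  choose lineThrough lineThrough_mem mem_lineThrough using hL.class_cover j
  have lineThrough_injOn : Set.InjOn lineThrough ℓ := by
    intro p hp q hq hpq
    by_contra hne
    exact hL.ne_of_class_ne hij hℓ (lineThrough_mem p) <|
      hL.eq_of_mem_of_mem hℓ (lineThrough_mem p) hne hp hq (mem_lineThrough p)
        (hpq ▸ mem_lineThrough q)
  have lineThrough_surjOn : Set.SurjOn lineThrough ℓ (L j) :=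
    Finset.surjOn_of_injOn_of_card_le lineThrough (fun p _ => lineThrough_mem p)
      lineThrough_injOn (by rw [hL.card_class, hL.card_line i ℓ hℓ])
  obtain ⟨p, hp, rfl⟩ := lineThrough_surjOn hℓ'
  exact ⟨p, Finset.mem_inter.2 ⟨hp, mem_lineThrough p⟩⟩

theorem card_inter_of_class_ne (hL : IsAffinePlane n L) (hij : i ≠ j) (hℓ : ℓ ∈ L i)
    (hℓ' : ℓ' ∈ L j) : (ℓ ∩ ℓ').card = 1 :=
  (hL.card_inter_le_one hℓ hℓ' (hL.ne_of_class_ne hij hℓ hℓ')).antisymm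
    (hL.inter_nonempty_of_class_ne hij hℓ hℓ').card_pos

theorem eq_functionGraph (hL : IsAffinePlane n L) (hℓ : ℓ ∈ L i) {f : Fin n → Fin n}
    (hf : ∀ a, (a, f a) ∈ ℓ) : ℓ = functionGraph f :=
  eq_functionGraph_of_card_le (by rw [hL.card_line i ℓ hℓ, Fintype.card_fin]) hf

end IsAffinePlane

theorem affinePlane_functions_one_collision_general {n : ℕ}
    {L : Fin (n + 1) → Finset (Finset (Fin n × Fin n))} (hL : IsAffinePlane n L)
    {i i' : Fin (n + 1)} {ℓ ℓ' : Finset (Fin n × Fin n)} (hℓ : ℓ ∈ L i) (hℓ' : ℓ' ∈ L i')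
    {f g : Fin (n + 1) → Fin n} (hfg0 : f 0 = g 0 ↔ i = i')
    (hf : ∀ a : Fin n, (a, f a.succ) ∈ ℓ) (hg : ∀ a : Fin n, (a, g a.succ) ∈ ℓ') (hfg : f ≠ g) :
    (Finset.univ.filter fun a => f a = g a).card = 1 := by
  have hℓ_graph : ℓ = functionGraph (Fin.tail f) := hL.eq_functionGraph hℓ hf
  have hℓ'_graph : ℓ' = functionGraph (Fin.tail g) := hL.eq_functionGraph hℓ' hg
  have card_collisions_succ :
      (Finset.univ.filter fun a : Fin n => f a.succ = g a.succ).card = (ℓ ∩ ℓ').card := by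
    rw [hℓ_graph, hℓ'_graph, card_functionGraph_inter]
    rfl
  rw [Fin.card_filter_univ_succ, card_collisions_succ]
  split_ifs with h0
  · have hne : ℓ ≠ ℓ' := fun h => hfg <| by
      have tail_eq : Fin.tail f = Fin.tail g :=
        functionGraph_injective (hℓ_graph.symm.trans (h.trans hℓ'_graph))
      rw [← Fin.cons_self_tail f, ← Fin.cons_self_tail g, h0, tail_eq]
    rw [hL.parallel_disjoint i ℓ hℓ ℓ' (hfg0.1 h0 ▸ hℓ') hne, Finset.card_empty]
  · exact hL.card_inter_of_class_ne (mt hfg0.2 h0) hℓ hℓ'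

/-- let `L 0, …, L n` be the parallel classes of an affine plane of order `n`
whose class `L 0` consists of the "vertical" lines `ℓ_x = {(x,y) : y}`.  For a nonzero class
index (written `i.succ` with `i : Fin n`) and a line `ℓ ∈ L i.succ`, the associated function
`f : {0,…,n} → {1,…,n}` satisfies `f 0 = i` and `(a, f a.succ) ∈ ℓ` for all `a`.  Any two
distinct such functions `f = f_{i,ℓ}` and `g = f_{i',ℓ'}` collide in exactly one place:
`|{a : f a = g a}| = 1`. -/
theorem affinePlane_functions_one_collision
    (n : ℕ) (L : Fin (n + 1) → Finset (Finset (Fin n × Fin n)))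
    (hL : IsAffinePlane n L)
    (hL0 : L 0 = Finset.univ.image
      (fun x : Fin n => Finset.univ.filter (fun p : Fin n × Fin n => p.1 = x)))
    (i i' : Fin n) (ℓ ℓ' : Finset (Fin n × Fin n))
    (hℓ : ℓ ∈ L i.succ) (hℓ' : ℓ' ∈ L i'.succ)
    (f g : Fin (n + 1) → Fin n)
    (hf0 : f 0 = i) (hf : ∀ a : Fin n, (a, f a.succ) ∈ ℓ)
    (hg0 : g 0 = i') (hg : ∀ a : Fin n, (a, g a.succ) ∈ ℓ')
    (hfg : f ≠ g) :
    (Finset.univ.filter fun a => f a = g a).card = 1 := by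
  exact affinePlane_functions_one_collision_general hL hℓ hℓ'
    (by rw [hf0, hg0, Fin.succ_inj]) hf hg hfg
end

section
/- Let (X, 𝓑) be an affine resolvable design with a realization in ℂ^v and associated orthonormal basis {|ψ_p⟩ : p ∈ X}. Suppose B ∈ 𝓑 belongs to the parallel class 𝓒′, and suppose p ∈ X satisfies ⟨ψ_p | B⟩ ≠ 0. Then the unique block B′ ∈ 𝓒′ containing p equals B. (Hence Alice's answer, obtained by locating the block of the revealed parallel class through her observed point p, always coincides with the block measured by the King's men.) -/
open scoped BigOperators

/-- An affine resolvable `(v, b, r, k, λ)` design on the point set `X`, together with its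
resolution into parallel classes: `blocks` is the family of `b` blocks, each a `k`-element
subset of the `v`-element point set `X`; every point lies in exactly `r` blocks and every
pair of distinct points lies in exactly `lam` blocks.  The family `classes` partitions the
blocks into parallel classes, each consisting of pairwise disjoint blocks covering `X`,
and any two nonparallel blocks (blocks from different parallel classes) intersect in the
same number `m ≥ 1` of points. -/
structure IsAffineResolvableDesign {α : Type*} [DecidableEq α]
    (X : Finset α) (v b r k lam m : ℕ)
    (blocks : Finset (Finset α)) (classes : Finset (Finset (Finset α))) : Prop where
  card_points : X.card = v
  card_blocks : blocks.card = b
  block_subset : ∀ B ∈ blocks, B ⊆ X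
  card_block : ∀ B ∈ blocks, B.card = k
  point_replication : ∀ p ∈ X, (blocks.filter fun B => p ∈ B).card = r
  pair_replication : ∀ p ∈ X, ∀ q ∈ X, p ≠ q →
    (blocks.filter fun B => p ∈ B ∧ q ∈ B).card = lam
  class_subset : ∀ C ∈ classes, ∀ B ∈ C, B ∈ blocks
  unique_class : ∀ B ∈ blocks, ∃! C, C ∈ classes ∧ B ∈ C
  parallel_disjoint : ∀ C ∈ classes, ∀ B ∈ C, ∀ B' ∈ C, B ≠ B' → B ∩ B' = ∅
  class_cover : ∀ C ∈ classes, ∀ p ∈ X, ∃ B ∈ C, p ∈ B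
  m_pos : 1 ≤ m
  nonparallel_inter : ∀ C ∈ classes, ∀ C' ∈ classes, C ≠ C' →
    ∀ B ∈ C, ∀ B' ∈ C', (B ∩ B').card = m

open scoped ComplexInnerProductSpace

/-- A realization in `ℂ^v` of an affine resolvable design with block family `blocks`,
resolution `classes`, block size `k` and `v` points: a family of unit vectors `vec B`
indexed by the blocks with `⟨vec B, vec C⟩ = δ_{B,C}` for parallel blocks (blocks in a
common parallel class) and `⟨vec B, vec C⟩ = k/v` for nonparallel blocks. -/
def IsRealization {α : Type*} [DecidableEq α] [Fintype α] (v k : ℕ)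
    (blocks : Finset (Finset α)) (classes : Finset (Finset (Finset α)))
    (vec : Finset α → EuclideanSpace ℂ α) : Prop :=
  (∀ B ∈ blocks, ‖vec B‖ = 1) ∧
  (∀ C ∈ classes, ∀ B ∈ C, ∀ B' ∈ C,
    ⟪vec B, vec B'⟫ = if B = B' then 1 else 0) ∧
  (∀ C ∈ classes, ∀ C' ∈ classes, C ≠ C' → ∀ B ∈ C, ∀ B' ∈ C',
    ⟪vec B, vec B'⟫ = (k : ℂ) / v)

/-!
Up to the factor `1/√k`, the vector `ψ_p` is `∑_{A ∋ p} |A⟩ − (r − 1)(k/v) ∑_{A ∈ 𝓒} |A⟩`. Pair it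
with `|B⟩`, where `B ∈ 𝓒'`. Of the `r` blocks through `p`, exactly one, say `B₀`, lies in `𝓒'`; it
contributes `δ_{B₀, B}` and each of the others contributes `k/v`. The sum over `𝓒` contributes `1`,
either because `𝓒 = 𝓒'` or because `𝓒` consists of `v/k` blocks. The multiples of `k/v` cancel, so
`⟨ψ_p|B⟩` is `1/√k` if `p ∈ B` and `0` otherwise. Hence an observed point lies in the measured
block, and a parallel class has only one block through it.
-/

open Finset

/-- A resolvable design without any balance condition: a family `blocks` of `k`-element subsets of
`X` that is the union of parallel classes, each a partition of `X`. It carries the incidence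
arguments about the blocks through a point. -/
structure IsUniformResolution {α : Type*} [DecidableEq α] (X : Finset α) (k : ℕ)
    (blocks : Finset (Finset α)) (classes : Finset (Finset (Finset α))) : Prop where
  card_block : ∀ B ∈ blocks, #B = k
  mem_blocks_iff : ∀ B, B ∈ blocks ↔ ∃ C ∈ classes, B ∈ C
  pairwiseDisjoint : ∀ C ∈ classes, (C : Set (Finset α)).PairwiseDisjoint id
  biUnion_class : ∀ C ∈ classes, C.biUnion id = X

/-- A family of vectors that is orthonormal on each of the given classes and in which vectors from
different classes have inner product `c`. Realizations of designs are the case `c = k / v`; the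
indices need not be blocks. -/
structure IsOverlapRealization (𝕜 : Type*) {ι E : Type*} [DecidableEq ι] [RCLike 𝕜]
    [NormedAddCommGroup E] [InnerProductSpace 𝕜 E] (c : 𝕜) (classes : Finset (Finset ι))
    (vec : ι → E) : Prop where
  inner_parallel : ∀ C ∈ classes, ∀ i ∈ C, ∀ j ∈ C, inner 𝕜 (vec i) (vec j) = if i = j then 1 else 0
  inner_nonparallel : ∀ C ∈ classes, ∀ C' ∈ classes, C ≠ C' → ∀ i ∈ C, ∀ j ∈ C',
    inner 𝕜 (vec i) (vec j) = c

/-- The vector `|ψ_p⟩ = −α ∑_{B ∈ 𝓒} |B⟩ + β ∑_{B ∋ p} |B⟩` of a point `p`, where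
`α = (r − 1)√k/v` and `β = 1/√k`, with `v` encoded as the number of points of `X` and `r` as the
number of blocks through `p`. -/
noncomputable def pointVector {α E : Type*} [DecidableEq α] [AddCommGroup E] [Module ℝ E]
    (X : Finset α) (k : ℕ) (blocks C : Finset (Finset α)) (vec : Finset α → E) (p : α) : E :=
  -((((#{B ∈ blocks | p ∈ B} : ℝ) - 1) * √k / #X) • ∑ B ∈ C, vec B) +
    (√k)⁻¹ • ∑ B ∈ blocks with p ∈ B, vec B

theorem pointVector_eq_smul {α E : Type*} [DecidableEq α] [AddCommGroup E] [Module ℝ E]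
    (X : Finset α) (k : ℕ) (blocks C : Finset (Finset α)) (vec : Finset α → E) (p : α) :
    pointVector X k blocks C vec p =
      (√k)⁻¹ • (∑ B ∈ blocks with p ∈ B, vec B -
        (((#{B ∈ blocks | p ∈ B} : ℝ) - 1) * (k / #X)) • ∑ B ∈ C, vec B) := by
  have coeff_eq (a : ℝ) : a * √k / #X = (√k)⁻¹ * (a * (k / #X)) :=
    calc
      a * √k / #X = a * (k / √k) / #X := by rw [Real.div_sqrt]
      _ = (√k)⁻¹ * (a * (k / #X)) := by ring
  rw [pointVector, coeff_eq, mul_smul, smul_sub, neg_add_eq_sub]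

namespace IsUniformResolution

variable {α : Type*} [DecidableEq α] {X : Finset α} {k : ℕ} {blocks : Finset (Finset α)}
  {classes : Finset (Finset (Finset α))} {C : Finset (Finset α)} {B B' : Finset α} {p : α}

theorem subset_of_mem_class (R : IsUniformResolution X k blocks classes) (hC : C ∈ classes)
    (hB : B ∈ C) : B ⊆ X :=
  R.biUnion_class C hC ▸ subset_biUnion_of_mem id hB

theorem exists_mem_class (R : IsUniformResolution X k blocks classes) (hC : C ∈ classes)
    (hp : p ∈ X) : ∃ B ∈ C, p ∈ B := by
  simpa only [← R.biUnion_class C hC, mem_biUnion, id] using hp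

theorem eq_of_mem_class (R : IsUniformResolution X k blocks classes) (hC : C ∈ classes)
    (hB : B ∈ C) (hB' : B' ∈ C) (hpB : p ∈ B) (hpB' : p ∈ B') : B = B' :=
  (R.pairwiseDisjoint C hC).elim_finset hB hB' p hpB hpB'

theorem card_class_mul (R : IsUniformResolution X k blocks classes) (hC : C ∈ classes) :
    #C * k = #X := by
  have card_of_mem : ∀ B ∈ C, #B = k := fun B hB =>
    R.card_block B ((R.mem_blocks_iff B).2 ⟨C, hC, hB⟩)
  rw [← R.biUnion_class C hC, card_biUnion (R.pairwiseDisjoint C hC)]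
  exact (sum_const_nat card_of_mem).symm

theorem exists_ne_class_of_mem (R : IsUniformResolution X k blocks classes) (hC : C ∈ classes)
    (hB : B ∈ C) (hpB : p ∈ B) (hB' : B' ∈ blocks) (hpB' : p ∈ B') (hne : B' ≠ B) :
    ∃ C' ∈ classes, C' ≠ C ∧ B' ∈ C' := by
  obtain ⟨C', hC', hB'C'⟩ := (R.mem_blocks_iff B').1 hB'
  refine ⟨C', hC', ?_, hB'C'⟩
  rintro rfl
  exact hne (R.eq_of_mem_class hC hB'C' hB hpB' hpB)

end IsUniformResolution

namespace IsOverlapRealization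

variable {𝕜 ι E : Type*} [DecidableEq ι] [RCLike 𝕜] [NormedAddCommGroup E]
  [InnerProductSpace 𝕜 E] {c : 𝕜} {classes : Finset (Finset ι)} {vec : ι → E}
  {C C' S : Finset ι} {i j : ι}

theorem inner_sum_class (V : IsOverlapRealization 𝕜 c classes vec) (hC : C ∈ classes)
    (hc : (#C : 𝕜) * c = 1) (hC' : C' ∈ classes) (hj : j ∈ C') :
    inner 𝕜 (∑ i ∈ C, vec i) (vec j) = 1 := by
  rw [sum_inner]
  obtain rfl | hne := eq_or_ne C C'
  · rw [sum_congr rfl fun i hi => V.inner_parallel C hC i hi j hj, sum_ite_eq', if_pos hj]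
  · rw [sum_congr rfl fun i hi => V.inner_nonparallel C hC C' hC' hne i hi j hj, sum_const,
      nsmul_eq_mul, hc]

theorem inner_sum_transversal (V : IsOverlapRealization 𝕜 c classes vec) (hC : C ∈ classes)
    (hi : i ∈ C) (hj : j ∈ C) (hiS : i ∈ S)
    (hS : ∀ a ∈ S, a ≠ i → ∃ C' ∈ classes, C' ≠ C ∧ a ∈ C') :
    inner 𝕜 (∑ a ∈ S, vec a) (vec j) = (if i = j then 1 else 0) + ((#S : 𝕜) - 1) * c := by
  have inner_of_ne : ∀ a ∈ S.erase i, inner 𝕜 (vec a) (vec j) = c := by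
    intro a ha
    obtain ⟨C', hC', hne, haC'⟩ := hS a (mem_of_mem_erase ha) (ne_of_mem_erase ha)
    exact V.inner_nonparallel C' hC' C hC hne a haC' j hj
  rw [sum_inner, ← add_sum_erase S _ hiS, V.inner_parallel C hC i hi j hj,
    sum_congr rfl inner_of_ne, sum_const, nsmul_eq_mul, cast_card_erase_of_mem hiS]

end IsOverlapRealization

section PointVector

variable {𝕜 α E : Type*} [DecidableEq α] [RCLike 𝕜] [NormedAddCommGroup E]
  [InnerProductSpace 𝕜 E] {X : Finset α} {k : ℕ} {blocks : Finset (Finset α)}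
  {classes : Finset (Finset (Finset α))} {vec : Finset α → E} {C C' : Finset (Finset α)}
  {B B' : Finset α} {p : α}

theorem inner_sum_blocks_through (R : IsUniformResolution X k blocks classes) {c : 𝕜}
    (V : IsOverlapRealization 𝕜 c classes vec) (hp : p ∈ X) (hC : C ∈ classes) (hB : B ∈ C) :
    inner 𝕜 (∑ A ∈ blocks with p ∈ A, vec A) (vec B) =
      (if p ∈ B then 1 else 0) + ((#{A ∈ blocks | p ∈ A} : 𝕜) - 1) * c := by
  obtain ⟨B₀, hB₀, hpB₀⟩ := R.exists_mem_class hC hp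
  have mem_iff : p ∈ B ↔ B₀ = B :=
    ⟨fun hpB => R.eq_of_mem_class hC hB₀ hB hpB₀ hpB, fun h => h ▸ hpB₀⟩
  have hB₀_mem : B₀ ∈ ({A ∈ blocks | p ∈ A} : Finset (Finset α)) :=
    mem_filter.2 ⟨(R.mem_blocks_iff B₀).2 ⟨C, hC, hB₀⟩, hpB₀⟩
  simp only [mem_iff]
  refine V.inner_sum_transversal hC hB₀ hB hB₀_mem fun A hA hne => ?_
  obtain ⟨hA_blocks, hpA⟩ := mem_filter.1 hA
  exact R.exists_ne_class_of_mem hC hB₀ hpB₀ hA_blocks hpA hne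

variable [Module ℝ E] [IsScalarTower ℝ 𝕜 E]

theorem inner_pointVector (R : IsUniformResolution X k blocks classes)
    (V : IsOverlapRealization 𝕜 ((k : 𝕜) / #X) classes vec) (hC : C ∈ classes) (hp : p ∈ X)
    (hC' : C' ∈ classes) (hB : B ∈ C') :
    inner 𝕜 (pointVector X k blocks C vec p) (vec B) = if p ∈ B then ((√k)⁻¹ : 𝕜) else 0 := by
  have hX : (#X : 𝕜) ≠ 0 := Nat.cast_ne_zero.2 (card_ne_zero_of_mem hp)
  have card_class_mul_overlap : (#C : 𝕜) * (k / #X) = 1 := by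
    rw [← mul_div_assoc, div_eq_one_iff_eq hX]
    exact_mod_cast R.card_class_mul hC
  rw [pointVector_eq_smul, inner_smul_left_eq_smul, inner_sub_left, inner_smul_left_eq_smul,
    V.inner_sum_class hC card_class_mul_overlap hC' hB, inner_sum_blocks_through R V hp hC' hB]
  simp [RCLike.real_smul_eq_coe_mul]

theorem block_of_point_eq_measured_block_general (R : IsUniformResolution X k blocks classes)
    (V : IsOverlapRealization 𝕜 ((k : 𝕜) / #X) classes vec) (hC : C ∈ classes)
    (hC' : C' ∈ classes) (hB : B ∈ C') (hne : inner 𝕜 (pointVector X k blocks C vec p) (vec B) ≠ 0)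
    (hB' : B' ∈ C') (hpB' : p ∈ B') : B' = B := by
  have hp : p ∈ X := R.subset_of_mem_class hC' hB' hpB'
  have hpB : p ∈ B := by
    by_contra hpB
    exact hne ((inner_pointVector R V hC hp hC' hB).trans (if_neg hpB))
  exact R.eq_of_mem_class hC' hB' hB hpB' hpB

end PointVector

theorem IsAffineResolvableDesign.isUniformResolution {α : Type*} [DecidableEq α] {X : Finset α}
    {v b r k lam m : ℕ} {blocks : Finset (Finset α)} {classes : Finset (Finset (Finset α))}
    (D : IsAffineResolvableDesign X v b r k lam m blocks classes) :
    IsUniformResolution X k blocks classes where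
  card_block := D.card_block
  mem_blocks_iff B :=
    ⟨fun hB => (D.unique_class B hB).exists, fun ⟨C, hC, hB⟩ => D.class_subset C hC B hB⟩
  pairwiseDisjoint C hC B hB B' hB' hne :=
    disjoint_iff_inter_eq_empty.2 (D.parallel_disjoint C hC B hB B' hB' hne)
  biUnion_class C hC :=
    Subset.antisymm (biUnion_subset.2 fun B hB => D.block_subset B (D.class_subset C hC B hB))
      fun p hp => mem_biUnion.2 (D.class_cover C hC p hp)

theorem IsRealization.isOverlapRealization {α : Type*} [DecidableEq α] [Fintype α] {v k : ℕ}
    {blocks : Finset (Finset α)} {classes : Finset (Finset (Finset α))}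
    {vec : Finset α → EuclideanSpace ℂ α} (hvec : IsRealization v k blocks classes vec) :
    IsOverlapRealization ℂ ((k : ℂ) / v) classes vec :=
  ⟨hvec.2.1, hvec.2.2⟩

/-- let `{ψ p : p ∈ X}` be the orthonormal basis built from a realization of
an affine resolvable design (using a parallel class `𝓒`, `α = (r−1)√k/v`, `β = 1/√k`).
If the block `B` belongs to the parallel class `𝓒'` and the point `p` satisfies
`⟨ψ p, vec B⟩ ≠ 0`, then any block `B'` of `𝓒'` containing `p` equals `B`: the unique
block of the revealed parallel class through the observed point `p` is the measured
block `B`. -/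
theorem block_of_point_eq_measured_block {α : Type*} [DecidableEq α] [Fintype α]
    (v b r k lam m : ℕ)
    (blocks : Finset (Finset α)) (classes : Finset (Finset (Finset α)))
    (D : IsAffineResolvableDesign (Finset.univ : Finset α) v b r k lam m blocks classes)
    (vec : Finset α → EuclideanSpace ℂ α)
    (hvec : IsRealization v k blocks classes vec)
    (C : Finset (Finset α)) (hC : C ∈ classes)
    (ψ : α → EuclideanSpace ℂ α)
    (hψ : ∀ p : α, ψ p =
      -((((r : ℝ) - 1) * Real.sqrt k / v) • ∑ B ∈ C, vec B) +
        ((Real.sqrt k)⁻¹ • ∑ B ∈ blocks.filter (fun B => p ∈ B), vec B))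
    (C' : Finset (Finset α)) (hC' : C' ∈ classes)
    (B : Finset α) (hB : B ∈ C')
    (p : α) (hne : ⟪ψ p, vec B⟫ ≠ 0)
    (B' : Finset α) (hB' : B' ∈ C') (hpB' : p ∈ B') :
    B' = B := by
  obtain rfl := D.card_points
  obtain rfl := D.point_replication p (mem_univ p)
  rw [hψ p] at hne
  exact block_of_point_eq_measured_block_general D.isUniformResolution hvec.isOverlapRealization
    hC hC' hB hne hB' hpB'
end
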